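/- Let K be a category and let ⌣¹ and ⌣² be independence notions on K such that every ⌣¹-independent square is ⌣²-independent, ⌣¹ has existence, and ⌣² has uniqueness. Then ⌣¹ = ⌣², i.e., a commutative square is ⌣¹-independent if and only if it is ⌣²-independent. -/

import Mathlib

open CategoryTheory CategoryTheory.Limits

universe v u

namespace Paper

/-- A preorder `I` is `κ`-directed if every subset of cardinality `< κ` has an upper bound. -/
def IsCardinalDirected (κ : Cardinal.{v}) (I : Type v) [Preorder I] : Prop :=
  ∀ S : Set I, Cardinal.mk S < κ → ∃ j : I, ∀ i ∈ S, i ≤ j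

section Sub

variable {C : Type u} [Category.{v} C]
variable (Obj : C → Prop) (Hom : ∀ ⦃X Y : C⦄, (X ⟶ Y) → Prop)

/-- `F` is a diagram lying in the (not necessarily full) subcategory determined by
the object predicate `Obj` and the morphism predicate `Hom`. -/
def SubDiagram {I : Type*} [Preorder I] (F : I ⥤ C) : Prop :=
  (∀ i, Obj (F.obj i)) ∧ ∀ (i j : I) (h : i ⟶ j), Hom (F.map h)

/-- `c` is a colimit cocone for `F` in the subcategory determined by `Obj` and `Hom`:
its apex and legs lie in the subcategory, and it enjoys the universal property with
respect to all cocones lying in the subcategory. -/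
def SubIsColimit {I : Type*} [Preorder I] {F : I ⥤ C} (c : Cocone F) : Prop :=
  Obj c.pt ∧ (∀ i, Hom (c.ι.app i)) ∧
    ∀ c' : Cocone F, Obj c'.pt → (∀ i, Hom (c'.ι.app i)) →
      ∃ m : c.pt ⟶ c'.pt, Hom m ∧ (∀ i, c.ι.app i ≫ m = c'.ι.app i) ∧
        ∀ m' : c.pt ⟶ c'.pt, Hom m' → (∀ i, c.ι.app i ≫ m' = c'.ι.app i) → m' = m

/-- `X` is a `κ`-presentable object of the subcategory determined by `Obj` and `Hom`. -/
def SubPresentable (κ : Cardinal.{v}) (X : C) : Prop :=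
  ∀ I : Preord.{v}, IsCardinalDirected κ I →
    ∀ F : I ⥤ C, SubDiagram Obj Hom F → ∀ c : Cocone F, SubIsColimit Obj Hom c →
      (∀ h : X ⟶ c.pt, Hom h → ∃ (i : I) (g : X ⟶ F.obj i), Hom g ∧ g ≫ c.ι.app i = h) ∧
      (∀ (i : I) (g g' : X ⟶ F.obj i), Hom g → Hom g' → g ≫ c.ι.app i = g' ≫ c.ι.app i →
        ∃ (j : I) (hij : i ≤ j), g ≫ F.map hij.hom = g' ≫ F.map hij.hom)

/-- The subcategory determined by `Obj` and `Hom` has `κ`-directed colimits. -/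
def SubHasDirectedColimits (κ : Cardinal.{v}) : Prop :=
  ∀ I : Preord.{v}, IsCardinalDirected κ I →
    ∀ F : I ⥤ C, SubDiagram Obj Hom F → ∃ c : Cocone F, SubIsColimit Obj Hom c

/-- The subcategory determined by `Obj` and `Hom` is a `κ`-accessible category:
it has `κ`-directed colimits and every object is a `κ`-directed colimit of
`κ`-presentable objects of the subcategory. -/
def SubAccessible (κ : Cardinal.{v}) : Prop :=
  SubHasDirectedColimits Obj Hom κ ∧
    ∀ X : C, Obj X → ∃ (I : Preord.{v}) (F : I ⥤ C) (c : Cocone F),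
      IsCardinalDirected κ I ∧ SubDiagram Obj Hom F ∧
      (∀ i, SubPresentable Obj Hom κ (F.obj i)) ∧ SubIsColimit Obj Hom c ∧ c.pt = X

/-- The subcategory determined by `Obj` and `Hom` is closed under `κ`-directed colimits in `C`. -/
def SubClosed (κ : Cardinal.{v}) : Prop :=
  ∀ I : Preord.{v}, IsCardinalDirected κ I →
    ∀ F : I ⥤ C, SubDiagram Obj Hom F →
      ∀ c : Cocone F, IsColimit c → SubIsColimit Obj Hom c

end Sub

/-- An independence notion on a category `K`: a class of commutative squares such that,
for a commutative square `(f, g, u, v)` and a morphism `m`, the square `(f, g, u, v)` is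
independent if and only if `(f, g, u ≫ m, v ≫ m)` is independent. -/
structure IndepNotion (K : Type u) [Category.{v} K] where
  /-- the class of independent squares `(f, g, u, v)` with `f ≫ u = g ≫ v` -/
  Indep : ∀ ⦃A B C D : K⦄, (A ⟶ B) → (A ⟶ C) → (B ⟶ D) → (C ⟶ D) → Prop
  comm_of_indep : ∀ ⦃A B C D : K⦄ ⦃f : A ⟶ B⦄ ⦃g : A ⟶ C⦄ ⦃u : B ⟶ D⦄ ⦃v : C ⟶ D⦄,
    Indep f g u v → f ≫ u = g ≫ v
  indep_iff_comp : ∀ ⦃A B C D E : K⦄ (f : A ⟶ B) (g : A ⟶ C) (u : B ⟶ D) (v : C ⟶ D)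
    (m : D ⟶ E), f ≫ u = g ≫ v → (Indep f g u v ↔ Indep f g (u ≫ m) (v ≫ m))

namespace IndepNotion

variable {K : Type u} [Category.{v} K] (R : IndepNotion K)

/-- Existence: every span can be completed to an independent square. -/
def HasExistence : Prop :=
  ∀ {A B C : K} (f : A ⟶ B) (g : A ⟶ C),
    ∃ (D : K) (u : B ⟶ D) (v : C ⟶ D), R.Indep f g u v

/-- Uniqueness: any two independent squares over the same span can be amalgamated. -/
def HasUniqueness : Prop :=
  ∀ {A B C D₁ D₂ : K} (f : A ⟶ B) (g : A ⟶ C)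
    (u₁ : B ⟶ D₁) (v₁ : C ⟶ D₁) (u₂ : B ⟶ D₂) (v₂ : C ⟶ D₂),
    R.Indep f g u₁ v₁ → R.Indep f g u₂ v₂ →
    ∃ (E : K) (w₁ : D₁ ⟶ E) (w₂ : D₂ ⟶ E),
      u₁ ≫ w₁ = u₂ ≫ w₂ ∧ v₁ ≫ w₁ = v₂ ≫ w₂

/-- Transitivity of independent squares. -/
def IsTransitive : Prop :=
  ∀ {A B C D E F : K} (f : A ⟶ B) (g : A ⟶ C) (u : B ⟶ D) (v : C ⟶ D)
    (g' : C ⟶ E) (u' : D ⟶ F) (v' : E ⟶ F),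
    R.Indep f g u v → R.Indep v g' u' v' → R.Indep f (g ≫ g') (u ≫ u') v'

/-- Symmetry of independent squares. -/
def IsSymmetric : Prop :=
  ∀ {A B C D : K} (f : A ⟶ B) (g : A ⟶ C) (u : B ⟶ D) (v : C ⟶ D),
    R.Indep f g u v ↔ R.Indep g f v u

/-- Right monotonicity. -/
def IsRightMonotonic : Prop :=
  ∀ {A B C' C D : K} (f : A ⟶ B) (g' : A ⟶ C') (c : C' ⟶ C) (u : B ⟶ D) (v : C ⟶ D),
    R.Indep f (g' ≫ c) u v → R.Indep f g' u (c ≫ v)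

/-- Left monotonicity. -/
def IsLeftMonotonic : Prop :=
  ∀ {A B' B C D : K} (f' : A ⟶ B') (b : B' ⟶ B) (g : A ⟶ C) (u : B ⟶ D) (v : C ⟶ D),
    R.Indep (f' ≫ b) g u v → R.Indep f' g (b ≫ u) v

/-- A morphism of the arrow category of `K` is an independent square. -/
def arrowHom : ∀ ⦃X Y : Arrow K⦄, (X ⟶ Y) → Prop :=
  fun X Y sq => R.Indep sq.left X.hom Y.hom sq.right

/-- `R` is accessible: the category `K_↓` (objects: morphisms of `K`; morphisms: independent
squares) is an accessible category, closed under `κ`-directed colimits in the arrow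
category, for some regular cardinal `κ`. -/
def IsAccessible : Prop :=
  ∃ κ : Cardinal.{v}, κ.IsRegular ∧
    SubAccessible (fun _ : Arrow K => True) R.arrowHom κ ∧
    SubClosed (fun _ : Arrow K => True) R.arrowHom κ

end IndepNotion

/-- `K` has chain bounds: every chain indexed by a well-ordered set admits a cocone. -/
def HasChainBounds (K : Type u) [Category.{v} K] : Prop :=
  ∀ (J : Type v) (_ : LinearOrder J) (_ : WellFoundedLT J) (F : J ⥤ K), Nonempty (Cocone F)

/-- `K` has `κ`-directed colimits for arbitrarily large regular cardinals `κ`. -/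
def HasArbitrarilyLargeDirectedColimits (K : Type u) [Category.{v} K] : Prop :=
  ∀ κ : Cardinal.{v}, ∃ κ' : Cardinal.{v}, κ ≤ κ' ∧ κ'.IsRegular ∧
    ∀ I : Preord.{v}, IsCardinalDirected κ' I → ∀ F : I ⥤ K, HasColimit F

/-- The cocones `(u₁, v₁)` and `(u₂, v₂)` on `B` and `C` become equal after composition with
suitable morphisms out of their apices. This is the conclusion of `IndepNotion.HasUniqueness`; as a
relation it need not be transitive. -/
def Amalgamable {K : Type u} [Category.{v} K] {B C D₁ D₂ : K}
    (u₁ : B ⟶ D₁) (v₁ : C ⟶ D₁) (u₂ : B ⟶ D₂) (v₂ : C ⟶ D₂) : Prop :=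
  ∃ (E : K) (w₁ : D₁ ⟶ E) (w₂ : D₂ ⟶ E), u₁ ≫ w₁ = u₂ ≫ w₂ ∧ v₁ ≫ w₁ = v₂ ≫ w₂

theorem IndepNotion.indep_iff_of_amalgamable {K : Type u} [Category.{v} K] (R : IndepNotion K)
    {A B C D₁ D₂ : K} {f : A ⟶ B} {g : A ⟶ C}
    {u₁ : B ⟶ D₁} {v₁ : C ⟶ D₁} {u₂ : B ⟶ D₂} {v₂ : C ⟶ D₂}
    (comm₁ : f ≫ u₁ = g ≫ v₁) (comm₂ : f ≫ u₂ = g ≫ v₂) (h : Amalgamable u₁ v₁ u₂ v₂) :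
    R.Indep f g u₁ v₁ ↔ R.Indep f g u₂ v₂ := by
  obtain ⟨E, w₁, w₂, hu, hv⟩ := h
  calc
    R.Indep f g u₁ v₁ ↔ R.Indep f g (u₁ ≫ w₁) (v₁ ≫ w₁) := R.indep_iff_comp f g u₁ v₁ w₁ comm₁
    _ ↔ R.Indep f g (u₂ ≫ w₂) (v₂ ≫ w₂) := by rw [hu, hv]
    _ ↔ R.Indep f g u₂ v₂ := (R.indep_iff_comp f g u₂ v₂ w₂ comm₂).symm

theorem indep_eq_of_subset_of_existence_of_uniqueness_general
    {K : Type u} [Category.{v} K] (R : IndepNotion K)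
    (S : ∀ ⦃A B C D : K⦄, (A ⟶ B) → (A ⟶ C) → (B ⟶ D) → (C ⟶ D) → Prop)
    (hcomm : ∀ {A B C D : K} {f : A ⟶ B} {g : A ⟶ C} {u : B ⟶ D} {v : C ⟶ D},
      S f g u v → f ≫ u = g ≫ v)
    (hsub : ∀ {A B C D : K} (f : A ⟶ B) (g : A ⟶ C) (u : B ⟶ D) (v : C ⟶ D),
      R.Indep f g u v → S f g u v)
    (hex : R.HasExistence)
    (huniq : ∀ {A B C D₁ D₂ : K} (f : A ⟶ B) (g : A ⟶ C)
      (u₁ : B ⟶ D₁) (v₁ : C ⟶ D₁) (u₂ : B ⟶ D₂) (v₂ : C ⟶ D₂),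
      S f g u₁ v₁ → S f g u₂ v₂ → Amalgamable u₁ v₁ u₂ v₂)
    {A B C D : K} (f : A ⟶ B) (g : A ⟶ C) (u : B ⟶ D) (v : C ⟶ D) :
    R.Indep f g u v ↔ S f g u v := by
  refine ⟨hsub f g u v, fun hS => ?_⟩
  obtain ⟨D', u', v', hR'⟩ := hex f g
  have amalgam : Amalgamable u v u' v' := huniq f g u v u' v' hS (hsub f g u' v' hR')
  exact (R.indep_iff_of_amalgamable (hcomm hS) (R.comm_of_indep hR') amalgam).2 hR'

/-- If every `⌣¹`-independent square is `⌣²`-independent, `⌣¹` has existence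
and `⌣²` has uniqueness, then `⌣¹ = ⌣²`. -/
theorem indep_eq_of_subset_of_existence_of_uniqueness
    {K : Type u} [Category.{v} K] (R₁ R₂ : IndepNotion K)
    (hsub : ∀ {A B C D : K} (f : A ⟶ B) (g : A ⟶ C) (u : B ⟶ D) (v : C ⟶ D),
      R₁.Indep f g u v → R₂.Indep f g u v)
    (hex : R₁.HasExistence) (huniq : R₂.HasUniqueness) :
    ∀ {A B C D : K} (f : A ⟶ B) (g : A ⟶ C) (u : B ⟶ D) (v : C ⟶ D),
      R₁.Indep f g u v ↔ R₂.Indep f g u v :=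
  indep_eq_of_subset_of_existence_of_uniqueness_general R₁ R₂.Indep (R₂.comm_of_indep ·)
    hsub hex huniq

end Paper
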